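/- arXiv:2602.00842 — 2 statements merged into one kernel-verified Lean document; each statement's English description precedes it below -/
import Mathlib

section
/- Let i, j ∈ ℍ denote the standard quaternion units. Suppose (R₋,S₋,R₊,S₊) are unit quaternions satisfying R₋S₋R₋⁻¹S₋⁻¹·R₊S₊R₊⁻¹S₊⁻¹ = 1 and R₋S₋R₋⁻¹S₋⁻¹ = −1. Then there exist unit quaternions u and A such that uR₋u⁻¹ = i, uS₋u⁻¹ = j, uR₊u⁻¹ = A·j·A⁻¹, and uS₊u⁻¹ = A·i·A⁻¹. Moreover, for unit quaternions A, A′, the quadruples (i, j, AjA⁻¹, AiA⁻¹) and (i, j, A′jA′⁻¹, A′iA′⁻¹) are simultaneously conjugate (by some unit quaternion) if and only if A′ = A or A′ = −A. Hence the level set κ⁻¹(−1) of the character variety of the genus two surface is in bijection with SU(2)/{±1} ≅ ℝP³. -/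
noncomputable section

/-- The standard quaternion unit `i`. -/
def qi : Quaternion ℝ := ⟨0, 1, 0, 0⟩

/-- The standard quaternion unit `j`. -/
def qj : Quaternion ℝ := ⟨0, 0, 1, 0⟩

/-- Quadruples of unit quaternions satisfying the genus two relation `[R₋,S₋][R₊,S₊] = 1`
and lying in the level set `κ = −1`, i.e. `[R₋,S₋] = −1`. -/
def memXneg (t : Quaternion ℝ × Quaternion ℝ × Quaternion ℝ × Quaternion ℝ) : Prop :=
  ‖t.1‖ = 1 ∧ ‖t.2.1‖ = 1 ∧ ‖t.2.2.1‖ = 1 ∧ ‖t.2.2.2‖ = 1 ∧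
    t.1 * t.2.1 * t.1⁻¹ * t.2.1⁻¹ * (t.2.2.1 * t.2.2.2 * t.2.2.1⁻¹ * t.2.2.2⁻¹) = 1 ∧
    t.1 * t.2.1 * t.1⁻¹ * t.2.1⁻¹ = -1

/-- Simultaneous conjugation relation on the level set `κ⁻¹(−1)`. -/
def conjRelNeg (s t : {t // memXneg t}) : Prop :=
  ∃ u : Quaternion ℝ, ‖u‖ = 1 ∧
    t.1.1 = u * s.1.1 * u⁻¹ ∧ t.1.2.1 = u * s.1.2.1 * u⁻¹ ∧
    t.1.2.2.1 = u * s.1.2.2.1 * u⁻¹ ∧ t.1.2.2.2 = u * s.1.2.2.2 * u⁻¹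

/-- The relation identifying a unit quaternion `A` with `±A`; its quotient is
`SU(2)/{±1} ≅ ℝP³`. -/
def pmRel (a b : {q : Quaternion ℝ // ‖q‖ = 1}) : Prop := b.1 = a.1 ∨ b.1 = -a.1

/-!
Unit quaternions have commutator `-1` exactly when they anticommute, and then both square to `-1`;
so `κ⁻¹(−1)` consists of two pairs satisfying the relations of `(i, j)`. Any two such pairs `(a, b)`
and `(x, y)` in a division ring are conjugate: since `a² = x² = -1`, `(x + a) a = x (x + a)`, so
`x + a` moves `a` to `x` (and `y` does if `x + a = 0`). Once `a = x`, the element `(y + b) b`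
commutes with `x` and moves `b` to `y` (and `x` does if `y + b = 0`). Normalizing the first pair to
`(i, j)` leaves only the stabilizer `±1`, and the second pair, swapped, is the conjugate of `(i, j)`
by some `A`, unique up to sign for the same reason.
-/

section GroupWithZero

variable {G : Type*} [GroupWithZero G] {a b : G}

lemma conj_eq_conj_iff_commute {x : G} (ha : a ≠ 0) (hb : b ≠ 0) :
    a * x * a⁻¹ = b * x * b⁻¹ ↔ Commute (b⁻¹ * a) x := by
  rw [mul_inv_eq_iff_eq_mul₀ ha, mul_assoc b, mul_assoc b, ← inv_mul_eq_iff_eq_mul₀ hb, Commute,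
    SemiconjBy]
  simp only [mul_assoc]

lemma commutator_eq_neg_one_iff [HasDistribNeg G] (ha : a ≠ 0) (hb : b ≠ 0) :
    a * b * a⁻¹ * b⁻¹ = -1 ↔ a * b = -(b * a) := by
  rw [mul_inv_eq_iff_eq_mul₀ hb, mul_inv_eq_iff_eq_mul₀ ha, neg_one_mul, neg_mul]

end GroupWithZero

/-- The elements `a` and `b` satisfy the defining relations of the quaternion units `i` and `j`.
In the quaternions these are the pairs of unit elements with commutator `-1`. -/
structure IsQuaternionPair {R : Type*} [Ring R] (a b : R) : Prop where
  mul_self_left : a * a = -1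
  mul_self_right : b * b = -1
  anticomm : a * b = -(b * a)

namespace IsQuaternionPair

section Ring

variable {R : Type*} [Ring R] {a b : R}

lemma symm (h : IsQuaternionPair a b) : IsQuaternionPair b a :=
  ⟨h.mul_self_right, h.mul_self_left, by rw [h.anticomm, neg_neg]⟩

lemma left_ne_zero [Nontrivial R] (h : IsQuaternionPair a b) : a ≠ 0 := by
  rintro rfl
  simpa using h.mul_self_left

lemma right_ne_zero [Nontrivial R] (h : IsQuaternionPair a b) : b ≠ 0 := h.symm.left_ne_zero

end Ring

section DivisionRing

variable {D : Type*} [DivisionRing D] {a b x y u : D}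

lemma conj (h : IsQuaternionPair a b) (hu : u ≠ 0) :
    IsQuaternionPair (u * a * u⁻¹) (u * b * u⁻¹) := by
  have conj_mul_conj (p q : D) : u * p * u⁻¹ * (u * q * u⁻¹) = u * (p * q) * u⁻¹ := by
    simp [mul_assoc, hu]
  constructor
  · rw [conj_mul_conj, h.mul_self_left]; simp [hu]
  · rw [conj_mul_conj, h.mul_self_right]; simp [hu]
  · rw [conj_mul_conj, conj_mul_conj, h.anticomm]; simp

lemma exists_conj_left_eq (h : IsQuaternionPair x y) (ha : a * a = -1) :
    ∃ u : D, u ≠ 0 ∧ u * a * u⁻¹ = x := by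
  by_cases hxa : x + a = 0
  · refine ⟨y, h.right_ne_zero, ?_⟩
    rw [mul_inv_eq_iff_eq_mul₀ h.right_ne_zero, h.anticomm, eq_neg_of_add_eq_zero_right hxa,
      mul_neg]
  · refine ⟨x + a, hxa, ?_⟩
    rw [mul_inv_eq_iff_eq_mul₀ hxa, add_mul, mul_add, ha, h.mul_self_left, add_comm]

lemma exists_conj_right_eq (hb : IsQuaternionPair x b) (hy : IsQuaternionPair x y) :
    ∃ u : D, u ≠ 0 ∧ u * x * u⁻¹ = x ∧ u * b * u⁻¹ = y := by
  by_cases hyb : y + b = 0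
  · refine ⟨x, hb.left_ne_zero, by simp, ?_⟩
    rw [mul_inv_eq_iff_eq_mul₀ hb.left_ne_zero, hb.anticomm, eq_neg_of_add_eq_zero_left hyb,
      neg_mul]
  · -- `y + b` carries `b` to `y` but anticommutes with `x`; the factor `b` repairs the sign.
    have hu : (y + b) * b ≠ 0 := mul_ne_zero hyb hb.right_ne_zero
    refine ⟨(y + b) * b, hu, ?_, ?_⟩
    · have hx : x * (y + b) = -((y + b) * x) := by
        rw [mul_add, add_mul, hb.anticomm, hy.anticomm, neg_add]
      rw [mul_inv_eq_iff_eq_mul₀ hu, ← mul_assoc, hx, neg_mul, mul_assoc, mul_assoc, hb.anticomm,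
        mul_neg, neg_neg]
    · have hy' : (y + b) * b = y * (y + b) := by
        rw [add_mul, mul_add, hb.mul_self_right, hy.mul_self_right, add_comm]
      rw [mul_inv_eq_iff_eq_mul₀ hu, ← mul_assoc, ← hy']

theorem exists_conj_eq (h : IsQuaternionPair a b) (h' : IsQuaternionPair x y) :
    ∃ u : D, u ≠ 0 ∧ u * a * u⁻¹ = x ∧ u * b * u⁻¹ = y := by
  obtain ⟨u, hu, rfl⟩ := h'.exists_conj_left_eq h.mul_self_left
  obtain ⟨v, hv, hvx, hvy⟩ := (h.conj hu).exists_conj_right_eq h'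
  refine ⟨v * u, mul_ne_zero hv hu, ?_, ?_⟩
  · simpa only [mul_inv_rev, mul_assoc] using hvx
  · simpa only [mul_inv_rev, mul_assoc] using hvy

end DivisionRing

lemma norm_left {D : Type*} [NormedDivisionRing D] {a b : D} (h : IsQuaternionPair a b) :
    ‖a‖ = 1 := by
  have hsq : ‖a‖ ^ 2 = 1 := by rw [← norm_pow, sq, h.mul_self_left, norm_neg, norm_one]
  exact (pow_eq_one_iff_of_nonneg (norm_nonneg a) two_ne_zero).mp hsq

end IsQuaternionPair

lemma ne_zero_of_norm_eq_one {E : Type*} [NormedAddGroup E] {x : E} (hx : ‖x‖ = 1) : x ≠ 0 :=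
  norm_ne_zero_iff.mp (hx ▸ one_ne_zero)

section Quaternion

open scoped Quaternion

@[simp] lemma qi_re : qi.re = 0 := rfl
@[simp] lemma qi_imI : qi.imI = 1 := rfl
@[simp] lemma qi_imJ : qi.imJ = 0 := rfl
@[simp] lemma qi_imK : qi.imK = 0 := rfl
@[simp] lemma qj_re : qj.re = 0 := rfl
@[simp] lemma qj_imI : qj.imI = 0 := rfl
@[simp] lemma qj_imJ : qj.imJ = 1 := rfl
@[simp] lemma qj_imK : qj.imK = 0 := rfl

lemma isQuaternionPair_qi_qj : IsQuaternionPair qi qj := by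
  constructor <;> ext <;> simp

lemma quaternion_re_mul_comm {R : Type*} [CommRing R] (a b : ℍ[R]) : (a * b).re = (b * a).re := by
  simp only [Quaternion.re_mul]
  ring

lemma re_eq_zero_of_anticomm {R : Type*} [Field R] [LinearOrder R] [IsStrictOrderedRing R]
    {a b : ℍ[R]} (hb : b ≠ 0) (h : a * b = -(b * a)) : a.re = 0 := by
  refine self_eq_neg.mp ?_
  calc
    a.re = (a * b * b⁻¹).re := by rw [mul_inv_cancel_right₀ hb]
    _ = -(b * a * b⁻¹).re := by rw [h, neg_mul, Quaternion.re_neg]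
    _ = -a.re := by rw [quaternion_re_mul_comm, inv_mul_cancel_left₀ hb]

lemma mul_self_eq_neg_one_of_anticomm {a b : ℍ[ℝ]} (ha : ‖a‖ = 1) (hb : b ≠ 0)
    (h : a * b = -(b * a)) : a * a = -1 := by
  rw [← sq, Quaternion.sq_eq_neg_normSq.mpr (re_eq_zero_of_anticomm hb h),
    Quaternion.normSq_eq_norm_mul_self, ha]
  simp

lemma isQuaternionPair_iff_norm_commutator {a b : ℍ[ℝ]} :
    IsQuaternionPair a b ↔ ‖a‖ = 1 ∧ ‖b‖ = 1 ∧ a * b * a⁻¹ * b⁻¹ = -1 := by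
  constructor
  · intro h
    exact ⟨h.norm_left, h.symm.norm_left,
      (commutator_eq_neg_one_iff h.left_ne_zero h.right_ne_zero).mpr h.anticomm⟩
  · rintro ⟨ha, hb, h⟩
    have ha₀ := ne_zero_of_norm_eq_one ha
    have hb₀ := ne_zero_of_norm_eq_one hb
    have hab := (commutator_eq_neg_one_iff ha₀ hb₀).mp h
    exact ⟨mul_self_eq_neg_one_of_anticomm ha hb₀ hab,
      mul_self_eq_neg_one_of_anticomm hb ha₀ (by rw [hab, neg_neg]), hab⟩

lemma IsQuaternionPair.exists_norm_eq_one_conj_eq {a b x y : ℍ[ℝ]} (h : IsQuaternionPair a b)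
    (h' : IsQuaternionPair x y) :
    ∃ u : ℍ[ℝ], ‖u‖ = 1 ∧ u * a * u⁻¹ = x ∧ u * b * u⁻¹ = y := by
  obtain ⟨u, hu, hua, hub⟩ := h.exists_conj_eq h'
  have hnorm : ‖‖u‖⁻¹ • u‖ = 1 := norm_smul_inv_norm hu
  have hne := ne_zero_of_norm_eq_one hnorm
  rw [mul_inv_eq_iff_eq_mul₀ hu] at hua hub
  refine ⟨‖u‖⁻¹ • u, hnorm, ?_, ?_⟩
  · rw [mul_inv_eq_iff_eq_mul₀ hne, smul_mul_assoc, hua, mul_smul_comm]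
  · rw [mul_inv_eq_iff_eq_mul₀ hne, smul_mul_assoc, hub, mul_smul_comm]

lemma eq_coe_re_of_commute_qi_of_commute_qj {q : ℍ[ℝ]} (hi : Commute q qi) (hj : Commute q qj) :
    q = (q.re : ℍ[ℝ]) := by
  have imJ_eq : q.imJ = -q.imJ := by simpa using congrArg QuaternionAlgebra.imK hi.eq.symm
  have imK_eq : q.imK = -q.imK := by simpa using congrArg QuaternionAlgebra.imJ hi.eq
  have imI_eq : q.imI = -q.imI := by simpa using congrArg QuaternionAlgebra.imK hj.eq
  ext <;> simp <;> linarith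

lemma eq_one_or_eq_neg_one_of_commute {q : ℍ[ℝ]} (hq : ‖q‖ = 1) (hi : Commute q qi)
    (hj : Commute q qj) : q = 1 ∨ q = -1 := by
  have hre := eq_coe_re_of_commute_qi_of_commute_qj hi hj
  rw [hre, Quaternion.norm_coe, Real.norm_eq_abs] at hq
  rw [hre]
  rcases eq_or_eq_neg_of_abs_eq hq with h | h <;> simp [h]

lemma conj_qi_qj_eq_iff {A B : ℍ[ℝ]} (hA : ‖A‖ = 1) (hB : ‖B‖ = 1) :
    (A * qi * A⁻¹ = B * qi * B⁻¹ ∧ A * qj * A⁻¹ = B * qj * B⁻¹) ↔ B = A ∨ B = -A := by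
  have hA₀ := ne_zero_of_norm_eq_one hA
  have hB₀ := ne_zero_of_norm_eq_one hB
  constructor
  · rintro ⟨hi, hj⟩
    rw [conj_eq_conj_iff_commute hA₀ hB₀] at hi hj
    rcases eq_one_or_eq_neg_one_of_commute (by simp [hA, hB]) hi hj with h | h <;>
      rw [inv_mul_eq_iff_eq_mul₀ hB₀] at h
    · exact .inl (by simp [h])
    · exact .inr (by simp [h])
  · rintro (rfl | rfl) <;> simp [inv_neg]

end Quaternion

lemma nonempty_quot_equiv_quot {α β : Type*} {r : α → α → Prop} {s : β → β → Prop}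
    (hs : Equivalence s) (f : α → β) (hf : ∀ a a', s (f a) (f a') ↔ r a a')
    (hsurj : ∀ b, ∃ a, s b (f a)) : Nonempty (Quot s ≃ Quot r) := by
  refine ⟨(Equiv.ofBijective (Quot.map f fun a a' => (hf a a').mpr) ⟨?_, ?_⟩).symm⟩
  · rintro ⟨a⟩ ⟨a'⟩ h
    exact Quot.sound ((hf a a').mp (hs.quot_mk_eq_iff _ _ |>.mp h))
  · rintro ⟨b⟩
    obtain ⟨a, ha⟩ := hsurj b
    exact ⟨Quot.mk r a, (Quot.sound ha).symm⟩

lemma memXneg_iff {t : Quaternion ℝ × Quaternion ℝ × Quaternion ℝ × Quaternion ℝ} :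
    memXneg t ↔ IsQuaternionPair t.1 t.2.1 ∧ IsQuaternionPair t.2.2.1 t.2.2.2 := by
  rw [isQuaternionPair_iff_norm_commutator, isQuaternionPair_iff_norm_commutator, memXneg]
  constructor
  · rintro ⟨hRm, hSm, hRp, hSp, hmul, hneg⟩
    rw [hneg, neg_one_mul] at hmul
    exact ⟨⟨hRm, hSm, hneg⟩, hRp, hSp, neg_eq_iff_eq_neg.mp hmul⟩
  · rintro ⟨⟨hRm, hSm, hneg⟩, hRp, hSp, hneg'⟩
    exact ⟨hRm, hSm, hRp, hSp, by simp [hneg, hneg'], hneg⟩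

lemma equivalence_conjRelNeg : Equivalence conjRelNeg where
  refl _ := ⟨1, by simp⟩
  symm := by
    rintro s t ⟨u, hu, hRm, hSm, hRp, hSp⟩
    have hu₀ := ne_zero_of_norm_eq_one hu
    exact ⟨u⁻¹, by simp [hu, hu₀, hRm, hSm, hRp, hSp, mul_assoc]⟩
  trans := by
    rintro s t r ⟨u, hu, hRm, hSm, hRp, hSp⟩ ⟨v, hv, hRm', hSm', hRp', hSp'⟩
    exact ⟨v * u, by simp [hu, hv, hRm, hSm, hRp, hSp, hRm', hSm', hRp', hSp', mul_assoc]⟩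

/-- The representative `(i, j, AjA⁻¹, AiA⁻¹)` of a point of the level set `κ⁻¹(−1)`. -/
def normalForm (A : {q : Quaternion ℝ // ‖q‖ = 1}) : {t // memXneg t} :=
  ⟨(qi, qj, A.1 * qj * A.1⁻¹, A.1 * qi * A.1⁻¹), memXneg_iff.mpr ⟨isQuaternionPair_qi_qj,
    isQuaternionPair_qi_qj.symm.conj (ne_zero_of_norm_eq_one A.2)⟩⟩

lemma exists_conjRelNeg_normalForm (t : {t // memXneg t}) :
    ∃ A, conjRelNeg t (normalForm A) := by
  obtain ⟨hm, hp⟩ := memXneg_iff.mp t.2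
  obtain ⟨u, hu, hRm, hSm⟩ := hm.exists_norm_eq_one_conj_eq isQuaternionPair_qi_qj
  obtain ⟨v, hv, hSp, hRp⟩ := isQuaternionPair_qi_qj.exists_norm_eq_one_conj_eq hp.symm
  refine ⟨⟨u * v, by rw [norm_mul, hu, hv, one_mul]⟩, u, hu, hRm.symm, hSm.symm, ?_, ?_⟩
  · simp only [normalForm, ← hRp, mul_inv_rev, mul_assoc]
  · simp only [normalForm, ← hSp, mul_inv_rev, mul_assoc]

lemma conjRelNeg_normalForm_iff (A B : {q : Quaternion ℝ // ‖q‖ = 1}) :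
    conjRelNeg (normalForm A) (normalForm B) ↔ pmRel A B := by
  rw [pmRel, ← conj_qi_qj_eq_iff A.2 B.2]
  constructor
  · rintro ⟨u, hu, hi, hj, hBj, hBi⟩
    have hu_eq : u = 1 ∨ u = -1 := by
      refine eq_one_or_eq_neg_one_of_commute hu ?_ ?_
      · exact ((eq_mul_inv_iff_mul_eq₀ (ne_zero_of_norm_eq_one hu)).mp hi).symm
      · exact ((eq_mul_inv_iff_mul_eq₀ (ne_zero_of_norm_eq_one hu)).mp hj).symm
    rcases hu_eq with rfl | rfl <;> simp_all [normalForm, inv_neg]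
  · rintro ⟨hi, hj⟩
    exact ⟨1, by simp [normalForm, hi, hj]⟩

/-- Every quadruple `(R₋,S₋,R₊,S₊)` of unit quaternions with `[R₋,S₋][R₊,S₊] = 1` and
`[R₋,S₋] = −1` is simultaneously conjugate to `(i, j, AjA⁻¹, AiA⁻¹)` for some unit
quaternion `A`; two such normal forms are simultaneously conjugate iff `A′ = ±A`; hence
the level set `κ⁻¹(−1)` of the genus two character variety is in bijection with
`SU(2)/{±1} ≅ ℝP³`. -/
theorem level_set_neg_one_is_RP3 :
    (∀ Rm Sm Rp Sp : Quaternion ℝ, ‖Rm‖ = 1 → ‖Sm‖ = 1 → ‖Rp‖ = 1 → ‖Sp‖ = 1 →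
      Rm * Sm * Rm⁻¹ * Sm⁻¹ * (Rp * Sp * Rp⁻¹ * Sp⁻¹) = 1 →
      Rm * Sm * Rm⁻¹ * Sm⁻¹ = -1 →
      ∃ u A : Quaternion ℝ, ‖u‖ = 1 ∧ ‖A‖ = 1 ∧
        u * Rm * u⁻¹ = qi ∧ u * Sm * u⁻¹ = qj ∧
        u * Rp * u⁻¹ = A * qj * A⁻¹ ∧ u * Sp * u⁻¹ = A * qi * A⁻¹) ∧
    (∀ A A' : Quaternion ℝ, ‖A‖ = 1 → ‖A'‖ = 1 →
      ((∃ u : Quaternion ℝ, ‖u‖ = 1 ∧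
          u * qi * u⁻¹ = qi ∧ u * qj * u⁻¹ = qj ∧
          u * (A * qj * A⁻¹) * u⁻¹ = A' * qj * A'⁻¹ ∧
          u * (A * qi * A⁻¹) * u⁻¹ = A' * qi * A'⁻¹) ↔
        (A' = A ∨ A' = -A))) ∧
    Nonempty (Quot conjRelNeg ≃ Quot pmRel) := by
  refine ⟨fun Rm Sm Rp Sp hRm hSm hRp hSp hmul hneg => ?_, fun A A' hA hA' => ?_, ?_⟩
  · obtain ⟨⟨A, hA⟩, u, hu, hi, hj, hjA, hiA⟩ := exists_conjRelNeg_normalForm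
      ⟨(Rm, Sm, Rp, Sp), hRm, hSm, hRp, hSp, hmul, hneg⟩
    exact ⟨u, A, hu, hA, hi.symm, hj.symm, hjA.symm, hiA.symm⟩
  · simpa only [conjRelNeg, normalForm, pmRel, eq_comm] using
      conjRelNeg_normalForm_iff ⟨A, hA⟩ ⟨A', hA'⟩
  · exact nonempty_quot_equiv_quot equivalence_conjRelNeg normalForm conjRelNeg_normalForm_iff
      exists_conjRelNeg_normalForm
end
end

section
/- Suppose R₋, S₋, R₊, S₊ are unit quaternions satisfying R₋S₋R₋⁻¹S₋⁻¹·R₊S₊R₊⁻¹S₊⁻¹ = 1. Let W = {Im(R₋), Im(star S₋ · star R₋), Im(S₊ · S₋), Im(star S₋ · R₊ · star S₊), Im(star R₊ · S₋)} ⊂ ℍ. Then the ℝ-linear span of W has dimension at most 2. -/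
/-!
Up to cyclic rotation, the relation says that the five quaternions whose imaginary parts form `W`
have the same nonzero real product in the given order and in the reverse order. As
`Re (x * y) = Re (y * x)`, this gives `Re (a * b * c) = Re (c * b * a)` for three cyclically
consecutive ones, and the two sides differ by `-2` times the triple product of the imaginary parts.
Hence any three consecutive imaginary parts are coplanar. A Grassmann-Plücker relation then makes
every other triple coplanar, unless one of the two remaining quaternions is real; but a real
quaternion can be moved to any position of the cycle, which makes the triple consecutive.
-/

open Module Quaternion
open scoped Finset

section LinearAlgebra

variable {K V ι : Type*} [DivisionRing K] [AddCommGroup V] [Module K V] {v : ι → V}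

lemma finrank_span_range_le_of_forall_not_linearIndepOn [Finite ι] {n : ℕ}
    (h : ∀ s : Finset ι, #s = n + 1 → ¬ LinearIndepOn K v s) :
    finrank K (Submodule.span K (Set.range v)) ≤ n := by
  obtain ⟨κ, f, hf, hspan, hli⟩ := exists_linearIndependent' K v
  have := Finite.of_injective f hf
  have := Fintype.ofFinite κ
  rw [← hspan, finrank_span_eq_card hli]
  by_contra! hcard
  obtain ⟨s, -, hs⟩ := Finset.exists_subset_card_eq (s := (Finset.univ : Finset κ)) hcard
  refine h (s.map ⟨f, hf⟩) (by rw [Finset.card_map, hs]) ?_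
  rw [Finset.coe_map]
  exact (hli.linearIndepOn s).image_of_comp f v

lemma linearIndependent_vec_of_linearIndepOn {R M : Type*} [Semiring R] [AddCommMonoid M]
    [Module R M] {v : ι → M} {i j k : ι} (hij : i ≠ j) (hik : i ≠ k) (hjk : j ≠ k)
    (h : LinearIndepOn R v {i, j, k}) : LinearIndependent R ![v i, v j, v k] := by
  have hinj : Function.Injective ![i, j, k] := by
    simp [Function.Injective, Fin.forall_fin_succ, hij, hik, hjk, hij.symm, hik.symm, hjk.symm]
  have hrange : Set.range ![i, j, k] ⊆ {i, j, k} :=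
    Set.range_subset_iff.2 (by simp [Fin.forall_fin_succ])
  have hcomp : v ∘ ![i, j, k] = ![v i, v j, v k] := by
    ext x
    fin_cases x <;> rfl
  rw [← hcomp]
  exact (linearIndepOn_range_iff hinj v).1 (h.mono hrange)

end LinearAlgebra

section GroupWithZero

variable {G₀ : Type*} [GroupWithZero G₀]

lemma mul_eq_one_of_commutator_mul_commutator_eq_one {a b c d : G₀} (ha : a ≠ 0) (hb : b ≠ 0)
    (h : a * b * a⁻¹ * b⁻¹ * (c * d * c⁻¹ * d⁻¹) = 1) :
    a * (b⁻¹ * a⁻¹) * (d * b) * (b⁻¹ * c * d⁻¹) * (c⁻¹ * b) = 1 := by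
  have hcomm : d * c * d⁻¹ * c⁻¹ = a * b * a⁻¹ * b⁻¹ := by
    rw [eq_inv_of_mul_eq_one_left h]
    simp only [mul_inv_rev, inv_inv, mul_assoc]
  calc a * (b⁻¹ * a⁻¹) * (d * b) * (b⁻¹ * c * d⁻¹) * (c⁻¹ * b)
      = a * b⁻¹ * a⁻¹ * (d * c * d⁻¹ * c⁻¹) * b := by
        simp only [mul_assoc, mul_inv_cancel_left₀ hb]
    _ = a * b⁻¹ * a⁻¹ * (a * b * a⁻¹ * b⁻¹) * b := by rw [hcomm]
    _ = 1 := by simp [mul_assoc, ha, hb]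

end GroupWithZero

section ImTripleProduct

variable {R : Type*} [CommRing R]

lemma re_mul_comm (a b : ℍ[R]) : (a * b).re = (b * a).re := by
  simp only [re_mul]
  ring

lemma commute_of_im_eq_zero {a : ℍ[R]} (h : a.im = 0) (x : ℍ[R]) : Commute a x := by
  rw [← re_add_im a, h, add_zero]
  exact coe_commutes _ _

/-- The scalar triple product of the imaginary parts of three quaternions, used to detect whether
these are coplanar. -/
def imTripleProduct (a b c : ℍ[R]) : R :=
  Matrix.det !![a.imI, a.imJ, a.imK; b.imI, b.imJ, b.imK; c.imI, c.imJ, c.imK]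

lemma imTripleProduct_eq (a b c : ℍ[R]) :
    imTripleProduct a b c =
      a.imI * b.imJ * c.imK - a.imI * b.imK * c.imJ - a.imJ * b.imI * c.imK +
        a.imJ * b.imK * c.imI + a.imK * b.imI * c.imJ - a.imK * b.imJ * c.imI := by
  simp [imTripleProduct, Matrix.det_fin_three]

lemma re_mul_mul_sub_re_mul_mul_rev (a b c : ℍ[R]) :
    (a * b * c).re - (c * b * a).re = -2 * imTripleProduct a b c := by
  simp only [imTripleProduct_eq, re_mul, imI_mul, imJ_mul, imK_mul]
  ring

lemma imTripleProduct_rotate (a b c : ℍ[R]) : imTripleProduct b c a = imTripleProduct a b c := by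
  simp only [imTripleProduct_eq]
  ring

lemma imTripleProduct_swap (a b c : ℍ[R]) : imTripleProduct b a c = -imTripleProduct a b c := by
  simp only [imTripleProduct_eq]
  ring

lemma cramer_imTripleProduct (a b c x : ℍ[R]) :
    imTripleProduct a b c • x.im = imTripleProduct x b c • a.im +
      imTripleProduct a x c • b.im + imTripleProduct a b x • c.im := by
  ext <;> simp [imTripleProduct_eq] <;> ring

lemma grassmannPlucker_imTripleProduct (a b c x y z : ℍ[R]) :
    imTripleProduct a b c * imTripleProduct x y z =
      imTripleProduct x b c * imTripleProduct a y z +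
        imTripleProduct a x c * imTripleProduct b y z +
        imTripleProduct a b x * imTripleProduct c y z := by
  simp only [imTripleProduct_eq]
  ring

lemma not_linearIndependent_im_of_imTripleProduct_eq_zero [IsDomain R] {a b c : ℍ[R]}
    (h : imTripleProduct a b c = 0) : ¬ LinearIndependent R ![a.im, b.im, c.im] := by
  obtain ⟨w, hw, hwM⟩ := Matrix.exists_vecMul_eq_zero_iff.2 h
  have hI : w 0 * a.imI + w 1 * b.imI + w 2 * c.imI = 0 := by
    simpa [Matrix.vecMul_eq_sum, Fin.sum_univ_three] using congrFun hwM 0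
  have hJ : w 0 * a.imJ + w 1 * b.imJ + w 2 * c.imJ = 0 := by
    simpa [Matrix.vecMul_eq_sum, Fin.sum_univ_three] using congrFun hwM 1
  have hK : w 0 * a.imK + w 1 * b.imK + w 2 * c.imK = 0 := by
    simpa [Matrix.vecMul_eq_sum, Fin.sum_univ_three] using congrFun hwM 2
  refine fun hli ↦ hw (funext (Fintype.linearIndependent_iff.1 hli w ?_))
  simp only [Fin.sum_univ_three]
  ext <;> simp [hI, hJ, hK]

end ImTripleProduct

section Pentagon

variable {K : Type*} [Field K] [LinearOrder K] [IsStrictOrderedRing K] {t : K}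

lemma star_eq_normSq_smul_inv (a : ℍ[K]) : star a = normSq a • a⁻¹ := by
  rcases eq_or_ne a 0 with rfl | ha
  · simp
  · rw [inv_def, smul_inv_smul₀ (normSq_ne_zero.2 ha)]

lemma mul_eq_coe_symm (ht : t ≠ 0) {x y : ℍ[K]} (h : x * y = t) : y * x = t := by
  have hy : y ≠ 0 := by
    rintro rfl
    exact ht (coe_injective (by simpa using h.symm))
  calc y * x = y * (x * y) * y⁻¹ := by rw [← mul_assoc, mul_inv_cancel_right₀ hy]
    _ = t := by rw [h, ← coe_commutes, mul_inv_cancel_right₀ hy]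

lemma normSq_mul_re_of_mul_eq_coe {R : Type*} [CommRing R] {r : R} {x y : ℍ[R]}
    (h : x * y = r) : normSq y * x.re = r * y.re := by
  have hstar : normSq y • x = r • star y := by
    rw [← mul_coe_eq_smul, ← coe_mul_eq_smul, ← self_mul_star, ← mul_assoc, h]
  simpa using congrArg (fun z : ℍ[R] ↦ z.re) hstar

lemma re_eq_re_of_mul_eq_coe (ht : t ≠ 0) {x x' y z : ℍ[K]} (h : x * (y * z) = t)
    (h' : x' * (z * y) = t) : x.re = x'.re := by
  have hne : normSq (y * z) ≠ 0 := by
    rw [normSq_ne_zero]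
    intro hyz
    exact ht (coe_injective (by simpa [hyz] using h.symm))
  refine mul_left_cancel₀ hne ?_
  calc normSq (y * z) * x.re = t * (y * z).re := normSq_mul_re_of_mul_eq_coe h
    _ = t * (z * y).re := by rw [re_mul_comm]
    _ = normSq (z * y) * x'.re := (normSq_mul_re_of_mul_eq_coe h').symm
    _ = normSq (y * z) * x'.re := by rw [map_mul, map_mul, mul_comm (normSq z)]

/-- Five quaternions, thought of as arranged in a cycle, whose product is the nonzero scalar `t`
both in the given order and in the reverse order. Allowing any `t` rather than only `1` covers
quaternions that are not normalized. -/
structure IsPentagon (t : K) (q : Fin 5 → ℍ[K]) : Prop where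
  ne_zero : t ≠ 0
  mul_eq : q 0 * q 1 * q 2 * q 3 * q 4 = t
  mul_rev_eq : q 4 * q 3 * q 2 * q 1 * q 0 = t

namespace IsPentagon

variable {q : Fin 5 → ℍ[K]}

lemma rotate (h : IsPentagon t q) : IsPentagon t fun i ↦ q (1 + i) where
  ne_zero := h.ne_zero
  mul_eq := mul_eq_coe_symm h.ne_zero (by simpa [mul_assoc] using h.mul_eq)
  mul_rev_eq := by simpa [mul_assoc] using mul_eq_coe_symm h.ne_zero h.mul_rev_eq

lemma shift (h : IsPentagon t q) (m : Fin 5) : IsPentagon t fun i ↦ q (m + i) := by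
  induction m using Fin.induction with
  | zero => simpa using h
  | succ m ih => simpa [← Fin.coeSucc_eq_succ, add_assoc] using ih.rotate

lemma imTripleProduct_consecutive (h : IsPentagon t q) (m : Fin 5) :
    imTripleProduct (q m) (q (m + 1)) (q (m + 2)) = 0 := by
  wlog hm : m = 0 generalizing q m
  · simpa using this (h.shift m) 0 rfl
  subst hm
  have hre : (q 0 * q 1 * q 2).re = (q 2 * q 1 * q 0).re := by
    refine re_eq_re_of_mul_eq_coe (y := q 3) (z := q 4) h.ne_zero ?_ ?_
    · simpa only [mul_assoc] using h.mul_eq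
    · exact mul_eq_coe_symm h.ne_zero (by simpa only [mul_assoc] using h.mul_rev_eq)
  have htriple := re_mul_mul_sub_re_mul_mul_rev (q 0) (q 1) (q 2)
  rw [hre, sub_self] at htriple
  simpa using htriple.symm

lemma move_of_im_eq_zero (h : IsPentagon t q) {m : Fin 5} (hm : (q m).im = 0) :
    IsPentagon t ![q (m + 1), q (m + 2), q m, q (m + 3), q (m + 4)] := by
  have hcomm (x : ℍ[K]) : q m * x = x * q m := (commute_of_im_eq_zero hm x).eq
  refine ⟨h.ne_zero, ?_, ?_⟩
  · calc q (m + 1) * q (m + 2) * q m * q (m + 3) * q (m + 4)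
        = q (m + 0) * q (m + 1) * q (m + 2) * q (m + 3) * q (m + 4) := by
          rw [← hcomm, add_zero, ← mul_assoc]
      _ = t := (h.shift m).mul_eq
  · calc q (m + 4) * q (m + 3) * q m * q (m + 2) * q (m + 1)
        = q (m + 4) * q (m + 3) * q (m + 2) * q (m + 1) * q (m + 0) := by
          simp only [mul_assoc, hcomm, add_zero]
      _ = t := (h.shift m).mul_rev_eq

lemma imTripleProduct_zero_one_three (h : IsPentagon t q) :
    imTripleProduct (q 0) (q 1) (q 3) = 0 := by
  by_contra hne
  have h012 : imTripleProduct (q 0) (q 1) (q 2) = 0 := h.imTripleProduct_consecutive 0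
  have h213 : imTripleProduct (q 2) (q 1) (q 3) = 0 := by
    rw [imTripleProduct_swap, neg_eq_zero]
    exact h.imTripleProduct_consecutive 1
  have h234 : imTripleProduct (q 2) (q 3) (q 4) = 0 := h.imTripleProduct_consecutive 2
  have h043 : imTripleProduct (q 0) (q 4) (q 3) = 0 := by
    rw [imTripleProduct_swap, imTripleProduct_rotate, neg_eq_zero]
    exact h.imTripleProduct_consecutive 3
  have h014 : imTripleProduct (q 0) (q 1) (q 4) = 0 := by
    rw [imTripleProduct_rotate]
    exact h.imTripleProduct_consecutive 4
  have hprod : imTripleProduct (q 0) (q 2) (q 3) * imTripleProduct (q 1) (q 3) (q 4) = 0 := by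
    simpa [h234, h213, h012] using
      (grassmannPlucker_imTripleProduct (q 0) (q 1) (q 3) (q 2) (q 3) (q 4)).symm
  rcases mul_eq_zero.1 hprod with h023 | h134
  · have him : (q 2).im = 0 := by
      simpa [h213, h023, h012, hne] using cramer_imTripleProduct (q 0) (q 1) (q 3) (q 2)
    exact hne ((h.move_of_im_eq_zero him).imTripleProduct_consecutive 3)
  · have h413 : imTripleProduct (q 4) (q 1) (q 3) = 0 := by rwa [← imTripleProduct_rotate]
    have him : (q 4).im = 0 := by
      simpa [h413, h043, h014, hne] using cramer_imTripleProduct (q 0) (q 1) (q 3) (q 4)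
    refine hne ?_
    rw [imTripleProduct_rotate]
    exact (h.move_of_im_eq_zero him).imTripleProduct_consecutive 4

lemma finrank_span_im_le_two (h : IsPentagon t q) :
    finrank K (Submodule.span K (Set.range fun i ↦ (q i).im)) ≤ 2 := by
  have triple_cases : ∀ s : Finset (Fin 5), #s = 3 →
      ∃ m, s = {m, m + 1, m + 2} ∨ s = {m, m + 1, m + 3} := by decide
  have not_linearIndepOn {i j k : Fin 5} (hij : i ≠ j) (hik : i ≠ k) (hjk : j ≠ k)
      (hzero : imTripleProduct (q i) (q j) (q k) = 0) :
      ¬ LinearIndepOn K (fun i ↦ (q i).im) {i, j, k} := fun hli ↦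
    not_linearIndependent_im_of_imTripleProduct_eq_zero hzero
      (linearIndependent_vec_of_linearIndepOn (v := fun i ↦ (q i).im) hij hik hjk hli)
  refine finrank_span_range_le_of_forall_not_linearIndepOn fun s hs ↦ ?_
  obtain ⟨m, rfl | rfl⟩ := triple_cases s hs
  · simpa using not_linearIndepOn (by simp) (by simp) (by simp) (h.imTripleProduct_consecutive m)
  · have hzero : imTripleProduct (q m) (q (m + 1)) (q (m + 3)) = 0 := by
      simpa using (h.shift m).imTripleProduct_zero_one_three
    simpa using not_linearIndepOn (by simp) (by simp) (by simp) hzero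

end IsPentagon

lemma exists_isPentagon_of_commutator_mul_commutator_eq_one {Rm Sm Rp Sp : ℍ[K]}
    (hrel : Rm * Sm * Rm⁻¹ * Sm⁻¹ * (Rp * Sp * Rp⁻¹ * Sp⁻¹) = 1) :
    ∃ t : K, IsPentagon t
      ![Rm, star Sm * star Rm, Sp * Sm, star Sm * Rp * star Sp, star Rp * Sm] := by
  obtain ⟨hRm, hSm, hRp, hSp⟩ : Rm ≠ 0 ∧ Sm ≠ 0 ∧ Rp ≠ 0 ∧ Sp ≠ 0 := by
    refine ⟨?_, ?_, ?_, ?_⟩ <;> rintro rfl <;> simp at hrel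
  have hmul := mul_eq_one_of_commutator_mul_commutator_eq_one hRm hSm hrel
  have hmul_rev : Rp⁻¹ * Sm * (Sm⁻¹ * Rp * Sp⁻¹) * (Sp * Sm) * (Sm⁻¹ * Rm⁻¹) * Rm = 1 := by
    simp [mul_assoc, hRm, hSm, hRp, hSp]
  refine ⟨normSq Rm * normSq Sm ^ 2 * normSq Rp * normSq Sp, ?_, ?_, ?_⟩
  · simp [hRm, hSm, hRp, hSp]
  · rw [← mul_one (Quaternion.coe _), ← hmul, coe_mul_eq_smul]
    simp only [star_eq_normSq_smul_inv, Algebra.mul_smul_comm, Algebra.smul_mul_assoc, smul_smul,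
      Fin.isValue, Matrix.cons_val_zero, Matrix.cons_val_one, Matrix.cons_val]
    congr 1
    ring
  · rw [← mul_one (Quaternion.coe _), ← hmul_rev, coe_mul_eq_smul]
    simp only [star_eq_normSq_smul_inv, Algebra.mul_smul_comm, Algebra.smul_mul_assoc, smul_smul,
      Fin.isValue, Matrix.cons_val_zero, Matrix.cons_val_one, Matrix.cons_val]
    congr 1
    ring

end Pentagon

theorem span_W_dim_le_two_general {K : Type*} [Field K] [LinearOrder K] [IsStrictOrderedRing K]
    (Rm Sm Rp Sp : ℍ[K])
    (hrel : Rm * Sm * Rm⁻¹ * Sm⁻¹ * (Rp * Sp * Rp⁻¹ * Sp⁻¹) = 1) :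
    finrank K (Submodule.span K
      ({Rm.im, (star Sm * star Rm).im, (Sp * Sm).im,
        (star Sm * Rp * star Sp).im, (star Rp * Sm).im} : Set ℍ[K])) ≤ 2 := by
  obtain ⟨t, h⟩ := exists_isPentagon_of_commutator_mul_commutator_eq_one hrel
  refine (Submodule.finrank_mono (Submodule.span_mono ?_)).trans h.finrank_span_im_le_two
  rintro _ (rfl | rfl | rfl | rfl | rfl)
  exacts [⟨0, rfl⟩, ⟨1, rfl⟩, ⟨2, rfl⟩, ⟨3, rfl⟩, ⟨4, rfl⟩]

/-- If unit quaternions `R₋, S₋, R₊, S₊` satisfy the genus two relation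
`[R₋,S₋][R₊,S₊] = 1`, then the real span of
`W = {Im R₋, Im(S̄₋R̄₋), Im(S₊S₋), Im(S̄₋R₊S̄₊), Im(R̄₊S₋)}` has dimension at most 2. -/
theorem span_W_dim_le_two (Rm Sm Rp Sp : Quaternion ℝ)
    (hRm : ‖Rm‖ = 1) (hSm : ‖Sm‖ = 1) (hRp : ‖Rp‖ = 1) (hSp : ‖Sp‖ = 1)
    (hrel : Rm * Sm * Rm⁻¹ * Sm⁻¹ * (Rp * Sp * Rp⁻¹ * Sp⁻¹) = 1) :
    Module.finrank ℝ (Submodule.span ℝ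
      ({Rm.im, (star Sm * star Rm).im, (Sp * Sm).im,
        (star Sm * Rp * star Sp).im, (star Rp * Sm).im} : Set (Quaternion ℝ))) ≤ 2 :=
  span_W_dim_le_two_general Rm Sm Rp Sp hrel
end
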